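/- Let k ≥ 2 and r ≥ 1 be integers and let H be the k-uniform hypergraph consisting of 2^r − 1 pairwise disjoint edges (a matching of size 2^r − 1). Then the Radon number of its associated convexity space satisfies r(X, C)_H ≥ r + k; that is, there exists a subset of X of size r + k − 1 with no Radon partition. -/

import Mathlib

open scoped Classical

universe u

section SetSystems

variable {X : Type*}

/-- A finite family of sets is intersecting if all of its members have a common element. -/
def IsIntersecting (F : Finset (Set X)) : Prop :=
  ∃ x, ∀ K ∈ F, x ∈ K

/-- A convexity space: `∅` and the whole space are convex, convexity is closed under
arbitrary (nonempty) intersections and under unions of (nonempty) chains. -/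
def IsConvexitySpace (C : Set (Set X)) : Prop :=
  ∅ ∈ C ∧ Set.univ ∈ C ∧
    (∀ D ⊆ C, D.Nonempty → ⋂₀ D ∈ C) ∧
    (∀ D ⊆ C, D.Nonempty → IsChain (· ⊆ ·) D → ⋃₀ D ∈ C)

/-- The convex hull of `Y`: intersection of all convex sets containing `Y`. -/
def convHull (C : Set (Set X)) (Y : Set X) : Set X :=
  ⋂₀ {K | K ∈ C ∧ Y ⊆ K}

/-- `Y` admits a Radon partition: a partition into two disjoint parts whose hulls meet. -/
def HasRadonPartition (C : Set (Set X)) (Y : Finset X) : Prop :=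
  ∃ A B : Finset X, (↑A ∪ ↑B : Set X) = ↑Y ∧ Disjoint (↑A : Set X) (↑B : Set X) ∧
    (convHull C ↑A ∩ convHull C ↑B).Nonempty

/-- The Radon number is at most `n`: every finite subset of size at least `n`
admits a Radon partition. -/
def RadonLE (C : Set (Set X)) (n : ℕ) : Prop :=
  ∀ Y : Finset X, n ≤ Y.card → HasRadonPartition C Y

/-- `Y` admits a Tverberg `k`-partition: a partition into `k` pairwise disjoint parts
whose hulls have a common point. -/
def HasTverbergPartition (C : Set (Set X)) (k : ℕ) (Y : Finset X) : Prop :=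
  ∃ P : Fin k → Finset X, (⋃ i, (↑(P i) : Set X)) = ↑Y ∧
    (∀ i j, i ≠ j → Disjoint (↑(P i) : Set X) (↑(P j) : Set X)) ∧
    (⋂ i, convHull C ↑(P i)).Nonempty

/-- A minimally non-intersecting family: not intersecting, but every proper subfamily
obtained by deleting one member is intersecting. -/
def MinNonIntersecting (F : Finset (Set X)) : Prop :=
  ¬ IsIntersecting F ∧ ∀ K ∈ F, IsIntersecting (F.erase K)

/-- The Helly number of the set system `S` is at most `n`. -/
def HellyLE (S : Set (Set X)) (n : ℕ) : Prop :=
  ∀ F : Finset (Set X), ↑F ⊆ S → MinNonIntersecting F → F.card ≤ n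

/-- The colorful Helly number of the set system `S` is at most `m`. -/
def ColorfulHellyLE (S : Set (Set X)) (m : ℕ) : Prop :=
  ∀ F : Fin m → Finset (Set X), (∀ i, ↑(F i) ⊆ S) →
    (∀ K : Fin m → Set X, (∀ i, K i ∈ F i) → (⋂ i, K i).Nonempty) →
    ∃ i, IsIntersecting (F i)

/-- `S` satisfies the fractional Helly property for `k`-tuples with function `β`. -/
def FracHelly (S : Set (Set X)) (k : ℕ) (β : ℝ → ℝ) : Prop :=
  ∀ α ∈ Set.Ioo (0 : ℝ) 1, ∀ F : Finset (Set X), ↑F ⊆ S →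
    α * (F.card.choose k : ℝ) ≤
      (((F.powersetCard k).filter (fun G => IsIntersecting G)).card : ℝ) →
    ∃ G ⊆ F, IsIntersecting G ∧ β α * (F.card : ℝ) ≤ (G.card : ℝ)

/-- The transversal number of the finite family `F` is at most `n`: `F` can be
partitioned into (at most) `n` intersecting subfamilies. -/
def TransversalLE (F : Finset (Set X)) (n : ℕ) : Prop :=
  ∃ P : Fin n → Finset (Set X), (∀ i, P i ⊆ F) ∧ (∀ K ∈ F, ∃! i, K ∈ P i) ∧
    ∀ i, (P i).Nonempty → IsIntersecting (P i)

/-- The fractional transversal number of `F` is at most `t`: there is a finitely supported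
fractional transversal of total weight at most `t`. -/
def FracTransversalLE (F : Finset (Set X)) (t : ℝ) : Prop :=
  ∃ f : X →₀ ℝ, (∀ x, 0 ≤ f x ∧ f x ≤ 1) ∧
    (∀ S ∈ F, 1 ≤ ∑ x ∈ f.support.filter (fun x => x ∈ S), f x) ∧
    (∑ x ∈ f.support, f x) ≤ t

/-- The weak ε-net property: there is a function `g` bounding the transversal number of
every finite subfamily in terms of its fractional transversal number. -/
def WeakEpsNetProp (S : Set (Set X)) : Prop :=
  ∃ g : ℝ → ℕ, ∀ F : Finset (Set X), ↑F ⊆ S → ∀ t : ℝ,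
    FracTransversalLE F t → (∀ s : ℝ, FracTransversalLE F s → t ≤ s) →
    TransversalLE F (g t)

/-- The `(p,q)`-property: among any `p` members (with repetition allowed) some `q`
of them are intersecting. -/
def PQProperty (F : Finset (Set X)) (p q : ℕ) : Prop :=
  ∀ K : Fin p → Set X, (∀ i, K i ∈ F) →
    ∃ s : Finset (Fin p), s.card = q ∧ ∃ x, ∀ i ∈ s, x ∈ K i

/-- A compact set system: every subsystem with empty total intersection contains a
finite subfamily with empty intersection. -/
def CompactSystem (S : Set (Set X)) : Prop :=
  ∀ T ⊆ S, ⋂₀ T = ∅ → ∃ F : Finset (Set X), ↑F ⊆ T ∧ ⋂₀ (↑F : Set (Set X)) = ∅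

/-- The VC-dimension of `S` is at most `d`: every finite set shattered by `S` has
size at most `d`. -/
def VCDimLE (S : Set (Set X)) (d : ℕ) : Prop :=
  ∀ Y : Finset X, (∀ Z ⊆ Y, ∃ K ∈ S, (↑Y : Set X) ∩ K = ↑Z) → Y.card ≤ d

/-- `S^∩`: all intersections of nonempty subcollections of `S`. -/
def interClosure (S : Set (Set X)) : Set (Set X) :=
  {T | ∃ D ⊆ S, D.Nonempty ∧ T = ⋂₀ D}

end SetSystems

section Hypergraphs

variable {V : Type*} [DecidableEq V]

/-- An independent set of the hypergraph with edge set `E`: contains no edge. -/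
def IsIndep (E : Finset (Finset V)) (I : Set V) : Prop :=
  ∀ e ∈ E, ¬ ((↑e : Set V) ⊆ I)

/-- A maximal independent set. -/
def IsMaxIndep (E : Finset (Finset V)) (I : Set V) : Prop :=
  IsIndep E I ∧ ∀ J : Set V, IsIndep E J → I ⊆ J → J = I

/-- The ground set of the associated convexity space: the maximal independent sets. -/
abbrev MIS (E : Finset (Finset V)) : Type _ := {σ : Set V // IsMaxIndep E σ}

/-- `S_W`: the maximal independent sets containing `W`. -/
def SW (E : Finset (Finset V)) (W : Set V) : Set (MIS E) :=
  {σ : MIS E | W ⊆ σ.1}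

/-- The associated convexity space of the hypergraph with edge set `E`. -/
def assocC (E : Finset (Finset V)) : Set (Set (MIS E)) :=
  {T | ∃ W : Set V, T = SW E W}

/-- Property `T_k(m)`: among any `m` (not necessarily distinct) edges, some `k` of them
admit a system of distinct representatives which is an edge. -/
def PropT (E : Finset (Finset V)) (k m : ℕ) : Prop :=
  ∀ e : Fin m → Finset V, (∀ i, e i ∈ E) →
    ∃ (g : Fin k → Fin m) (v : Fin k → V), StrictMono g ∧ Function.Injective v ∧
      (∀ j, v j ∈ e (g j)) ∧ Finset.image v Finset.univ ∈ E

/-- The chromatic number of the hypergraph is at most `n`: the vertex set can be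
partitioned into (at most) `n` independent sets. -/
def ChromaticLE (E : Finset (Finset V)) (n : ℕ) : Prop :=
  ∃ P : Fin n → Set V, (∀ v : V, ∃! i, v ∈ P i) ∧
    ∀ i, (P i).Nonempty → IsIndep E (P i)

/-- The clique number is at most `w`: every set of vertices all of whose `k`-element
subsets are edges has size at most `w`. -/
def CliqueNumLE (E : Finset (Finset V)) (k w : ℕ) : Prop :=
  ∀ Q : Finset V, (∀ q ⊆ Q, q.card = k → q ∈ E) → Q.card ≤ w

/-- Property `δ_k(m)`: any sunflower of `m` edges contains `k` edges admitting a system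
of distinct representatives which is an edge. -/
def PropDelta (E : Finset (Finset V)) (k m : ℕ) : Prop :=
  ∀ G : Finset (Finset V), G ⊆ E → G.card = m →
    (∃ S : Finset V, ∀ e ∈ G, ∀ e' ∈ G, e ≠ e' → e ∩ e' = S) →
    ∃ (f : Fin k → Finset V) (v : Fin k → V), Function.Injective f ∧ (∀ j, f j ∈ G) ∧
      Function.Injective v ∧ (∀ j, v j ∈ f j) ∧ Finset.image v Finset.univ ∈ E

end Hypergraphs

/-!
In a matching, removing one vertex from every edge leaves a maximal independent set, so a family of
maximal independent sets amounts to a colouring of its index set `ι` by the vertices of `e`, for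
each edge `e`: the colour of `p` is the vertex of `e` removed for `p`. The hull of a family consists
of the maximal independent sets containing its intersection, so the two halves of a partition of `ι`
have disjoint hulls as soon as some edge uses different colours on the two halves. It remains to
find few colourings such that every partition of `ι` is respected by one of them. For
`ι = α ⊕ β` with `|α| = r` and `|β| = k - 1`, the `2 ^ r - 1` nonempty sets `S ⊆ α` provide them:
use `β` as colours for itself, a fixed colour of `β` on `α \ S`, and one extra colour on `S`.
-/

section Separating

variable {ι κ κ' α β : Type*} {X : κ → Type*} {Y : κ' → Type*}

/-- A family of colourings `f i : ι → X i` is separating if every set of points is a union of colour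
classes of some `f i`. For edges `i` and removed vertices `f i p`, it is what keeps the maximal
independent sets indexed by `ι` free of Radon partitions. -/
def IsSeparating (f : ∀ i, ι → X i) : Prop :=
  ∀ P : Set ι, ∃ i, ∃ Q : Set (X i), f i ⁻¹' Q = P

theorem IsSeparating.comp {f : ∀ i, ι → X i} (hf : IsSeparating f) {φ : κ' → κ}
    (hφ : Function.Surjective φ) {ψ : ∀ j, X (φ j) → Y j} (hψ : ∀ j, Function.Injective (ψ j)) :
    IsSeparating fun j ↦ ψ j ∘ f (φ j) := by
  intro P
  obtain ⟨i, Q, rfl⟩ := hf P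
  obtain ⟨j, rfl⟩ := hφ i
  exact ⟨j, ψ j '' Q, by rw [Set.preimage_comp, (hψ j).preimage_image]⟩

/-- The colouring of `α ⊕ β` that is injective on `β`, gives the points of `S` the extra colour
`none`, and gives the remaining points of `α` the colour of `z`. -/
noncomputable def mergeColoring (z : β) (S : Set α) : α ⊕ β → Option β :=
  Sum.elim (fun i ↦ if i ∈ S then none else some z) some

theorem isSeparating_mergeColoring [Nonempty α] (z : β) :
    IsSeparating fun S : {S : Set α // S.Nonempty} ↦ mergeColoring z S.1 := by
  intro P
  -- `S` collects the points of `α` on the other side of `P` than `z`, unless there are none.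
  obtain ⟨S, hS, b, hb, hz⟩ : ∃ S : Set α, S.Nonempty ∧ ∃ b : Prop,
      (∀ i ∈ S, b ↔ Sum.inl i ∈ P) ∧ ∀ i ∉ S, Sum.inr z ∈ P ↔ Sum.inl i ∈ P := by
    by_cases h : ∃ i, ¬(Sum.inr z ∈ P ↔ Sum.inl i ∈ P)
    · exact ⟨{i | ¬(Sum.inr z ∈ P ↔ Sum.inl i ∈ P)}, h, Sum.inr z ∉ P,
        fun i hi ↦ not_iff.mp hi, fun i hi ↦ not_not.mp hi⟩
    · push Not at h
      exact ⟨Set.univ, Set.univ_nonempty, Sum.inr z ∈ P, fun i _ ↦ h i,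
        fun i hi ↦ absurd (Set.mem_univ i) hi⟩
  refine ⟨⟨S, hS⟩, {x | x.elim b fun j ↦ Sum.inr j ∈ P}, Set.ext ?_⟩
  rintro (i | j)
  · by_cases hi : i ∈ S
    · simpa [mergeColoring, hi] using hb i hi
    · simpa [mergeColoring, hi] using hz i hi
  · simp [mergeColoring]

theorem exists_surjective_nonempty_subsets [Fintype α] [Nonempty α] [Fintype κ]
    (hκ : 2 ^ Fintype.card α - 1 ≤ Fintype.card κ) :
    ∃ φ : κ → {S : Set α // S.Nonempty}, Function.Surjective φ := by
  have hcard : Fintype.card {S : Set α // S.Nonempty} = 2 ^ Fintype.card α - 1 := by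
    simp [Set.nonempty_iff_ne_empty, Fintype.card_subtype_compl]
  have : Nonempty {S : Set α // S.Nonempty} := ⟨⟨Set.univ, Set.univ_nonempty⟩⟩
  obtain ⟨g⟩ := Function.Embedding.nonempty_of_card_le (hcard.trans_le hκ)
  exact ⟨Function.invFun g, Function.invFun_surjective g.injective⟩

theorem exists_isSeparating [Fintype α] [Nonempty α] [Fintype β] [Nonempty β] [Fintype κ]
    [∀ i, Fintype (X i)] (hκ : 2 ^ Fintype.card α - 1 ≤ Fintype.card κ)
    (hX : ∀ i, Fintype.card β < Fintype.card (X i)) :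
    ∃ f : ∀ i, α ⊕ β → X i, IsSeparating f := by
  obtain ⟨φ, hφ⟩ := exists_surjective_nonempty_subsets hκ
  have hψ (i : κ) : Nonempty (Option β ↪ X i) :=
    Function.Embedding.nonempty_of_card_le (Fintype.card_option.trans_le (hX i))
  exact ⟨_, (isSeparating_mergeColoring (Classical.arbitrary β)).comp hφ
    fun i ↦ (hψ i).some.injective⟩

end Separating

section ConvexHull

variable {V ι : Type*} {E : Finset (Finset V)}

theorem subset_SW_iff {A : Set (MIS E)} {W : Set V} :
    A ⊆ SW E W ↔ W ⊆ ⋂ σ ∈ A, (σ : Set V) :=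
  Set.subset_iInter₂_iff.symm

theorem convHull_assocC (A : Set (MIS E)) :
    convHull (assocC E) A = SW E (⋂ σ ∈ A, (σ : Set V)) := by
  refine Set.Subset.antisymm (Set.sInter_subset_of_mem ⟨⟨_, rfl⟩, subset_SW_iff.2 subset_rfl⟩) ?_
  rintro τ hτ _ ⟨⟨W, rfl⟩, hA⟩
  exact (subset_SW_iff.1 hA).trans hτ

theorem disjoint_convHull_of_edge_subset {A B : Set (MIS E)} {e : Finset V} (he : e ∈ E)
    (h : (e : Set V) ⊆ (⋂ σ ∈ A, (σ : Set V)) ∪ ⋂ σ ∈ B, (σ : Set V)) :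
    Disjoint (convHull (assocC E) A) (convHull (assocC E) B) := by
  rw [convHull_assocC, convHull_assocC, Set.disjoint_left]
  exact fun τ hA hB ↦ τ.2.1 e he (h.trans (Set.union_subset hA hB))

/-- A family of maximal independent sets is split by edges if, for every partition of its index set,
the intersections over the two parts together cover some edge. Such a family has no Radon
partition. -/
def SplitByEdges (σ : ι → MIS E) : Prop :=
  ∀ P : Set ι, ∃ e ∈ E, ∀ v ∈ e, (∀ p ∈ P, v ∈ (σ p : Set V)) ∨ ∀ p ∉ P, v ∈ (σ p : Set V)

theorem SplitByEdges.injective {σ : ι → MIS E} (hσ : SplitByEdges σ) : Function.Injective σ := by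
  intro p q hpq
  by_contra hne
  obtain ⟨e, he, h⟩ := hσ {p}
  refine (σ p).2.1 e he fun v hv ↦ ?_
  rcases h v hv with hP | hQ
  · exact hP p rfl
  · exact hpq ▸ hQ q (Ne.symm hne)

theorem SplitByEdges.not_hasRadonPartition {σ : ι → MIS E} (hσ : SplitByEdges σ)
    {Y : Finset (MIS E)} (hY : (Y : Set (MIS E)) ⊆ Set.range σ) :
    ¬HasRadonPartition (assocC E) Y := by
  rintro ⟨A, B, hAB, hdisj, hmeet⟩
  obtain ⟨e, he, h⟩ := hσ {p | σ p ∈ A}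
  refine Set.not_disjoint_iff_nonempty_inter.2 hmeet
    (disjoint_convHull_of_edge_subset he fun v hv ↦ (h v hv).imp (fun hA ↦ ?_) fun hB ↦ ?_)
  · refine Set.mem_iInter₂.2 fun a ha ↦ ?_
    obtain ⟨p, rfl⟩ := hY (hAB.subset <| Or.inl ha)
    exact hA p ha
  · refine Set.mem_iInter₂.2 fun b hb ↦ ?_
    obtain ⟨q, rfl⟩ := hY (hAB.subset <| Or.inr hb)
    exact hB q fun hq ↦ Set.disjoint_left.1 hdisj hq hb

theorem SplitByEdges.exists_card_eq_not_hasRadonPartition [Fintype ι] {σ : ι → MIS E}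
    (hσ : SplitByEdges σ) :
    ∃ Y : Finset (MIS E), Y.card = Fintype.card ι ∧ ¬HasRadonPartition (assocC E) Y :=
  ⟨Finset.univ.map ⟨σ, hσ.injective⟩, Finset.card_map _, hσ.not_hasRadonPartition (by simp)⟩

end ConvexHull

section Matching

variable {V ι : Type*} {E : Finset (Finset V)}

theorem isMaxIndep_compl {T : Set V} (hT : ∀ v ∈ T, ∃ e ∈ E, v ∈ e)
    (hE : ∀ e ∈ E, ∃! v, v ∈ e ∧ v ∈ T) : IsMaxIndep E Tᶜ := by
  refine ⟨fun e he hsub ↦ ?_, fun J hJ hTJ ↦ Set.Subset.antisymm (fun v hvJ hvT ↦ ?_) hTJ⟩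
  · obtain ⟨v, ⟨hve, hvT⟩, -⟩ := hE e he
    exact hsub hve hvT
  · obtain ⟨e, he, hve⟩ := hT v hvT
    refine hJ e he fun w hwe ↦ ?_
    by_cases hwT : w ∈ T
    · exact (hE e he).unique ⟨hwe, hwT⟩ ⟨hve, hvT⟩ ▸ hvJ
    · exact hTJ hwT

theorem mem_range_choice_iff (hE : (E : Set (Finset V)).PairwiseDisjoint id) (c : ∀ e : E, e.1)
    (e : E) {v : V} (hv : v ∈ e.1) : v ∈ Set.range (fun e' ↦ (c e' : V)) ↔ v = c e := by
  refine ⟨?_, fun h ↦ ⟨e, h.symm⟩⟩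
  rintro ⟨e', rfl⟩
  have he : e' = e := Subtype.ext (hE.elim_finset e'.2 e.2 _ (c e').2 hv)
  rw [he]

/-- The maximal independent set of a matching `E` obtained by removing the vertex `c e` from each
edge `e`. -/
def complTransversal (hE : (E : Set (Finset V)).PairwiseDisjoint id) (c : ∀ e : E, e.1) : MIS E :=
  ⟨(Set.range fun e ↦ (c e : V))ᶜ, isMaxIndep_compl
    (by rintro _ ⟨e, rfl⟩; exact ⟨e, e.2, (c e).2⟩)
    fun e he ↦ ⟨c ⟨e, he⟩, ⟨(c ⟨e, he⟩).2, ⟨e, he⟩, rfl⟩,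
      fun _ hv ↦ (mem_range_choice_iff hE c ⟨e, he⟩ hv.1).1 hv.2⟩⟩

theorem mem_complTransversal_iff (hE : (E : Set (Finset V)).PairwiseDisjoint id)
    (c : ∀ e : E, e.1) (e : E) {v : V} (hv : v ∈ e.1) :
    v ∈ (complTransversal hE c : Set V) ↔ v ≠ c e :=
  (mem_range_choice_iff hE c e hv).not

theorem IsSeparating.splitByEdges (hE : (E : Set (Finset V)).PairwiseDisjoint id)
    {c : ∀ e : E, ι → e.1} (hc : IsSeparating c) :
    SplitByEdges fun p ↦ complTransversal hE fun e ↦ c e p := by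
  intro P
  obtain ⟨e, Q, rfl⟩ := hc P
  refine ⟨e, e.2, fun v hv ↦ ?_⟩
  simp only [mem_complTransversal_iff hE _ e hv]
  by_cases hvQ : ⟨v, hv⟩ ∈ Q
  · right
    rintro p hp rfl
    exact hp hvQ
  · left
    rintro p hp rfl
    exact hvQ hp

end Matching

theorem matching_radon_lower_bound_general {V : Type*} {k r : ℕ} (hk : 2 ≤ k) (hr : 1 ≤ r)
    {E : Finset (Finset V)} (hsize : ∀ e ∈ E, k ≤ e.card) (hcard : 2 ^ r - 1 ≤ E.card)
    (hdisj : (E : Set (Finset V)).PairwiseDisjoint id) :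
    ∃ Y : Finset (MIS E), Y.card = r + k - 1 ∧ ¬HasRadonPartition (assocC E) Y := by
  have : NeZero r := ⟨by lia⟩
  have : NeZero (k - 1) := ⟨by lia⟩
  obtain ⟨c, hc⟩ : ∃ c : ∀ e : E, Fin r ⊕ Fin (k - 1) → e.1, IsSeparating c :=
    exists_isSeparating (by simpa using hcard) fun e ↦ by
      have := hsize e e.2
      simp only [Fintype.card_fin, Fintype.card_coe]
      lia
  obtain ⟨Y, hY, hradon⟩ := (hc.splitByEdges hdisj).exists_card_eq_not_hasRadonPartition
  refine ⟨Y, ?_, hradon⟩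
  simp only [hY, Fintype.card_sum, Fintype.card_fin]
  lia

/-- If `H` is a `k`-uniform matching of size `2 ^ r - 1`, then the Radon number
of its associated convexity space is at least `r + k`: some subset of size `r + k - 1`
admits no Radon partition. -/
theorem matching_radon_lower_bound {V : Type u} [Fintype V] [DecidableEq V] (k r : ℕ)
    (hk : 2 ≤ k) (hr : 1 ≤ r) (E : Finset (Finset V))
    (hunif : ∀ e ∈ E, e.card = k) (hcard : E.card = 2 ^ r - 1)
    (hdisj : ∀ e ∈ E, ∀ e' ∈ E, e ≠ e' → Disjoint e e')
    (hcover : ∀ v : V, ∃ e ∈ E, v ∈ e) :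
    ∃ Y : Finset (MIS E), Y.card = r + k - 1 ∧ ¬ HasRadonPartition (assocC E) Y :=
  matching_radon_lower_bound_general hk hr (fun e he ↦ (hunif e he).ge) hcard.ge
    fun e he e' he' hne ↦ hdisj e he e' he' hne
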